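/- arXiv:math/0401300 — 2 statements merged into one kernel-verified Lean document; each statement's English description precedes it below -/
import Mathlib

section
/- For every nonnegative integer n, T(3,n) = 16·C_n − 8·C_{n+1} + C_{n+2} (as an identity of rational numbers; here T(3,n) = 60·(2n)!/(n!·(n+3)!)). -/
/-- The super Catalan number `T(m,n) = (1/2) * (2m)! * (2n)! / (m! * n! * (m+n)!)`,
as a rational number. -/
def superCatalan (m n : ℕ) : ℚ :=
  (Nat.factorial (2 * m) * Nat.factorial (2 * n) : ℚ) /
    (2 * (Nat.factorial m * Nat.factorial n * Nat.factorial (m + n)))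

/-!
Raising `m` by one multiplies `T(m,n)` by `2(2m+1)/(m+n+1)`, and by symmetry raising `n` multiplies
it by `2(2n+1)/(m+n+1)`. These two factors add up to `4`, so `T(m+1,n) = 4 T(m,n) - T(m,n+1)`. Since
`T(1,n) = C_n`, applying this recurrence twice expresses `T(3,n)` through `C_n`, `C_{n+1}` and
`C_{n+2}`, with the coefficients of `(4 - x)²`.
-/

theorem superCatalan_comm (m n : ℕ) : superCatalan m n = superCatalan n m := by
  rw [superCatalan, superCatalan, Nat.add_comm n m, mul_comm (Nat.factorial (2 * n) : ℚ),
    mul_comm (Nat.factorial n : ℚ)]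

theorem add_add_one_mul_superCatalan_succ_left (m n : ℕ) :
    ((m : ℚ) + n + 1) * superCatalan (m + 1) n = 2 * (2 * m + 1) * superCatalan m n := by
  have factorial_two_mul_succ : (Nat.factorial (2 * (m + 1)) : ℚ) =
      (2 * m + 2) * (2 * m + 1) * Nat.factorial (2 * m) := by
    rw [Nat.mul_succ, Nat.factorial_succ, Nat.factorial_succ]
    push_cast
    ring
  have factorial_succ_add : (Nat.factorial (m + 1 + n) : ℚ) =
      (m + n + 1) * Nat.factorial (m + n) := by
    rw [Nat.add_right_comm, Nat.factorial_succ]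
    push_cast
    rfl
  rw [superCatalan, superCatalan, factorial_two_mul_succ, factorial_succ_add, Nat.factorial_succ m]
  push_cast
  field_simp

theorem add_add_one_mul_superCatalan_succ_right (m n : ℕ) :
    ((m : ℚ) + n + 1) * superCatalan m (n + 1) = 2 * (2 * n + 1) * superCatalan m n := by
  rw [superCatalan_comm m, superCatalan_comm m, add_comm (m : ℚ)]
  exact add_add_one_mul_superCatalan_succ_left n m

theorem superCatalan_succ_left_add_superCatalan_succ_right (m n : ℕ) :
    superCatalan (m + 1) n + superCatalan m (n + 1) = 4 * superCatalan m n := by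
  have add_add_one_ne_zero : (m : ℚ) + n + 1 ≠ 0 := by positivity
  apply mul_left_cancel₀ add_add_one_ne_zero
  rw [mul_add, add_add_one_mul_superCatalan_succ_left, add_add_one_mul_superCatalan_succ_right]
  ring

theorem superCatalan_zero_left (n : ℕ) : superCatalan 0 n = (n.centralBinom : ℚ) / 2 := by
  rw [superCatalan, Nat.centralBinom_eq_two_mul_choose, two_mul n, Nat.cast_add_choose]
  simp only [Nat.mul_zero, Nat.zero_add, Nat.factorial_zero, Nat.cast_one, one_mul]
  rw [mul_comm, div_div]

theorem superCatalan_one_left (n : ℕ) : superCatalan 1 n = catalan n := by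
  have succ_ne_zero : (n : ℚ) + 1 ≠ 0 := by positivity
  apply mul_left_cancel₀ succ_ne_zero
  calc ((n : ℚ) + 1) * superCatalan 1 n = 2 * superCatalan 0 n := by
        simpa using add_add_one_mul_superCatalan_succ_left 0 n
    _ = n.centralBinom := by rw [superCatalan_zero_left]; ring
    _ = (n + 1) * catalan n := by exact_mod_cast (succ_mul_catalan_eq_centralBinom n).symm

theorem superCatalan_three (n : ℕ) :
    superCatalan 3 n =
      16 * (catalan n : ℚ) - 8 * (catalan (n + 1) : ℚ) + (catalan (n + 2) : ℚ) := by
  have recurrence (m k : ℕ) :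
      superCatalan (m + 1) k = 4 * superCatalan m k - superCatalan m (k + 1) :=
    eq_sub_of_add_eq (superCatalan_succ_left_add_superCatalan_succ_right m k)
  calc superCatalan 3 n = 4 * superCatalan 2 n - superCatalan 2 (n + 1) := recurrence 2 n
    _ = 4 * (4 * superCatalan 1 n - superCatalan 1 (n + 1)) -
          (4 * superCatalan 1 (n + 1) - superCatalan 1 (n + 2)) := by
        rw [recurrence 1 n, recurrence 1 (n + 1)]
    _ = 16 * (catalan n : ℚ) - 8 * (catalan (n + 1) : ℚ) + (catalan (n + 2) : ℚ) := by
        simp only [superCatalan_one_left]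
        ring
end

section
/- For every integer k ≥ 1, the identity G_k · (1 − X·G_{k−1}) = 1 holds in ℚ[[X]]; equivalently, G_k = 1/(1 − X·G_{k−1}). -/
/-- A ballot path: a sequence of steps, each `+1` or `-1`, all of whose
partial sums are nonnegative. -/
def IsBallot (P : List ℤ) : Prop :=
  (∀ s ∈ P, s = 1 ∨ s = -1) ∧ ∀ k, 0 ≤ (P.take k).sum

/-- A Dyck path of semilength `n`: a ballot path with `2n` steps ending at level `0`. -/
def IsDyck (n : ℕ) (P : List ℤ) : Prop :=
  IsBallot P ∧ P.length = 2 * n ∧ P.sum = 0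

/-- The height of a path: the maximum of its partial sums (`0` for the empty path). -/
def pathHeight (P : List ℤ) : ℤ :=
  (((List.range (P.length + 1)).map fun k => (P.take k).sum).foldr max 0)

/-- `G k` is the generating function for Dyck paths of height at most `k`,
counted by semilength. -/
noncomputable def G (k : ℕ) : PowerSeries ℚ :=
  PowerSeries.mk fun n =>
    (Nat.card {P : List ℤ // IsDyck n P ∧ pathHeight P ≤ (k : ℤ)} : ℚ)

/-!
A nonempty Dyck path factors uniquely as `U p D q` at its first return to level `0`, where `p` and
`q` are Dyck paths. The height of `U p D q` is `max (height p + 1) (height q)`, which is at most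
`k + 1` exactly when `p` has height at most `k` and `q` has height at most `k + 1`; on generating
functions this reads `G (k + 1) = 1 + X * G k * G (k + 1)`.
-/

section GenFun

open PowerSeries Finset.HasAntidiagonal

variable {α β : Type*} (R : Type*) [Semiring R]

/-- The ordinary generating function of a class `α` of objects weighted by `w`, whose coefficient
of `X ^ n` is the number of objects of weight `n`. A weight shared by infinitely many objects
contributes the coefficient `0`. -/
noncomputable def genFun (w : α → ℕ) : PowerSeries R :=
  mk fun n => (Nat.card {a // w a = n} : R)

variable {R}

theorem genFun_comp_of_bijective {f : α → β} (hf : f.Bijective) (w : β → ℕ) :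
    genFun R (fun a => w (f a)) = genFun R w := by
  ext n
  have hcard : Nat.card {a // w (f a) = n} = Nat.card {b // w b = n} :=
    Nat.card_congr ((Equiv.ofBijective f hf).subtypeEquiv fun _ => Iff.rfl)
  simp only [genFun, coeff_mk, hcard]

theorem genFun_option {v : α → ℕ} {w : Option α → ℕ} (w_none : w none = 0)
    (w_some : ∀ a, w (some a) = v a + 1) : genFun R w = 1 + X * genFun R v := by
  ext (_ | n)
  · have hcard : Nat.card {o // w o = 0} = 1 := by
      have eq_none : ∀ o, w o = 0 ↔ o = none := by
        rintro (_ | a) <;> simp [w_none, w_some]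
      simp [eq_none]
    simp [genFun, hcard]
  · have hcard : Nat.card {a // v a = n} = Nat.card {o // w o = n + 1} := by
      refine Nat.card_eq_of_bijective (fun a => ⟨some a.1, by rw [w_some, a.2]⟩) ⟨?_, ?_⟩
      · exact fun a b hab => Subtype.ext (Option.some_injective _ (congrArg Subtype.val hab))
      · rintro ⟨_ | a, ha⟩
        · simp [w_none] at ha
        · exact ⟨⟨a, by simpa [w_some] using ha⟩, rfl⟩
    simp [genFun, coeff_one, coeff_succ_X_mul, hcard]

/-- Pairs of total weight `n`, grouped by the weights of their two components. -/
def pairsOfWeightEquiv (v : α → ℕ) (w : β → ℕ) (n : ℕ) :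
    {x : α × β // v x.1 + w x.2 = n} ≃
      Σ ij : antidiagonal n, {a // v a = ij.1.1} × {b // w b = ij.1.2} where
  toFun x := ⟨⟨(v x.1.1, w x.1.2), mem_antidiagonal.mpr x.2⟩, ⟨x.1.1, rfl⟩, ⟨x.1.2, rfl⟩⟩
  invFun y := ⟨(y.2.1.1, y.2.2.1), by
    rw [y.2.1.2, y.2.2.2, mem_antidiagonal.mp y.1.2]⟩
  left_inv _ := rfl
  right_inv := by
    rintro ⟨⟨⟨i, j⟩, _⟩, ⟨a, ha⟩, ⟨b, hb⟩⟩
    obtain rfl : v a = i := ha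
    obtain rfl : w b = j := hb
    rfl

theorem genFun_prod (v : α → ℕ) (w : β → ℕ) [∀ i, Finite {a // v a = i}]
    [∀ j, Finite {b // w b = j}] :
    genFun R (fun x : α × β => v x.1 + w x.2) = genFun R v * genFun R w := by
  ext n
  have hcard : Nat.card {x : α × β // v x.1 + w x.2 = n} =
      ∑ ij ∈ antidiagonal n, Nat.card {a // v a = ij.1} * Nat.card {b // w b = ij.2} := by
    rw [Nat.card_congr (pairsOfWeightEquiv v w n), Nat.card_sigma,
      ← Finset.sum_coe_sort (antidiagonal n)]
    simp only [Nat.card_prod]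
  simp only [genFun, coeff_mk, coeff_mul, hcard, Nat.cast_sum, Nat.cast_mul]

end GenFun

section PathHeight

theorem foldr_max_le_iff {α : Type*} [LinearOrder α] {l : List α} {b c : α} :
    l.foldr max b ≤ c ↔ b ≤ c ∧ ∀ x ∈ l, x ≤ c := by
  induction l with
  | nil => simp
  | cons a l ih => simp [ih, and_left_comm]

theorem pathHeight_le_iff {P : List ℤ} {c : ℤ} :
    pathHeight P ≤ c ↔ ∀ j, (P.take j).sum ≤ c := by
  simp only [pathHeight, foldr_max_le_iff, List.forall_mem_map, List.mem_range]
  refine ⟨fun h j => ?_, fun h => ⟨by simpa using h 0, fun j _ => h j⟩⟩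
  rcases lt_or_ge j (P.length + 1) with hj | hj
  · exact h.2 j hj
  · simpa [List.take_of_length_le (Nat.le_of_succ_le hj)] using h.2 P.length (Nat.lt_succ_self _)

theorem pathHeight_nonneg (P : List ℤ) : 0 ≤ pathHeight P := by
  simpa using pathHeight_le_iff.mp le_rfl 0

theorem pathHeight_nil : pathHeight [] = 0 := rfl

theorem pathHeight_cons (a : ℤ) (P : List ℤ) :
    pathHeight (a :: P) = max 0 (a + pathHeight P) := by
  refine eq_of_forall_ge_iff fun c => ?_
  rw [max_le_iff, ← le_sub_iff_add_le', pathHeight_le_iff, pathHeight_le_iff,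
    ← Nat.and_forall_add_one]
  simp [le_sub_iff_add_le']

theorem pathHeight_append (P Q : List ℤ) :
    pathHeight (P ++ Q) = max (pathHeight P) (P.sum + pathHeight Q) := by
  induction P with
  | nil => simp [pathHeight_nil, pathHeight_nonneg]
  | cons a P ih =>
    rw [List.cons_append, pathHeight_cons, pathHeight_cons, ih, List.sum_cons, ← max_add_add_left,
      max_assoc, add_assoc]

end PathHeight

section DyckWord

open DyckStep

/-- The increment of a lattice path at a `DyckStep`. -/
def stepValue : DyckStep → ℤ
  | U => 1
  | D => -1

theorem stepValue_injective : Function.Injective stepValue := by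
  rintro (_ | _) (_ | _) <;> simp [stepValue]

theorem sum_map_stepValue (l : List DyckStep) :
    (l.map stepValue).sum = l.count U - l.count D := by
  induction l with
  | nil => rfl
  | cons s l ih => cases s <;> simp [stepValue, ih] <;> ring

/-- The path of a Dyck word, as a list of steps `1` and `-1`. -/
def toPath (p : DyckWord) : List ℤ :=
  p.toList.map stepValue

theorem toPath_injective : Function.Injective toPath := fun _ _ h =>
  DyckWord.ext (stepValue_injective.list_map h)

theorem sum_toPath (p : DyckWord) : (toPath p).sum = 0 := by
  rw [toPath, sum_map_stepValue, p.count_U_eq_count_D, sub_self]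

theorem isDyck_toPath (p : DyckWord) : IsDyck p.semilength (toPath p) := by
  refine ⟨⟨fun s hs => ?_, fun i => ?_⟩, ?_, sum_toPath p⟩
  · obtain ⟨d, -, rfl⟩ := List.mem_map.mp hs
    cases d <;> simp [stepValue]
  · rw [toPath, ← List.map_take, sum_map_stepValue, sub_nonneg, Nat.cast_le]
    exact p.count_D_le_count_U i
  · rw [toPath, List.length_map, p.two_mul_semilength_eq_length]

theorem exists_toPath_eq {n : ℕ} {P : List ℤ} (hP : IsDyck n P) :
    ∃ p : DyckWord, p.semilength = n ∧ toPath p = P := by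
  obtain ⟨⟨steps, nonneg⟩, length_eq, sum_eq_zero⟩ := hP
  obtain ⟨l, rfl⟩ : P ∈ Set.range (List.map stepValue) := by
    rw [Set.range_list_map]
    intro s hs
    rcases steps s hs with rfl | rfl
    exacts [⟨U, rfl⟩, ⟨D, rfl⟩]
  simp only [← List.map_take, sum_map_stepValue, sub_nonneg, sub_eq_zero, Nat.cast_le,
    Nat.cast_inj] at nonneg sum_eq_zero
  let p : DyckWord := ⟨l, sum_eq_zero, nonneg⟩
  have two_mul_semilength : 2 * p.semilength = 2 * n := by
    rw [p.two_mul_semilength_eq_length, ← length_eq, List.length_map]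
  exact ⟨p, by omega, rfl⟩

theorem pathHeight_toPath_add (p q : DyckWord) :
    pathHeight (toPath (p + q)) = max (pathHeight (toPath p)) (pathHeight (toPath q)) := by
  have toPath_add : toPath (p + q) = toPath p ++ toPath q := List.map_append
  rw [toPath_add, pathHeight_append, sum_toPath, zero_add]

theorem pathHeight_toPath_nest (p : DyckWord) :
    pathHeight (toPath p.nest) = pathHeight (toPath p) + 1 := by
  have toPath_nest : toPath p.nest = 1 :: (toPath p ++ [-1]) := by
    simp [toPath, DyckWord.nest, stepValue]
  have nonneg := pathHeight_nonneg (toPath p)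
  rw [toPath_nest, pathHeight_cons, pathHeight_append, sum_toPath, pathHeight_cons, pathHeight_nil]
  omega

/-- The Dyck words of height at most `k`. -/
def heightLE (k : ℕ) : Set DyckWord :=
  {p | pathHeight (toPath p) ≤ k}

theorem zero_mem_heightLE (k : ℕ) : 0 ∈ heightLE k :=
  (Nat.cast_nonneg k : (0 : ℤ) ≤ k)

theorem nest_add_mem_heightLE {k : ℕ} {p q : DyckWord} :
    p.nest + q ∈ heightLE (k + 1) ↔ p ∈ heightLE k ∧ q ∈ heightLE (k + 1) := by
  simp [heightLE, pathHeight_toPath_add, pathHeight_toPath_nest]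

instance finite_heightLE_semilength (k n : ℕ) :
    Finite {p : heightLE k // p.1.semilength = n} :=
  Finite.of_injective (fun p => (⟨p.1.1, p.2⟩ : {p : DyckWord // p.semilength = n}))
    fun _ _ h => Subtype.ext (Subtype.ext (Subtype.mk.inj h))

theorem G_eq_genFun (k : ℕ) : G k = genFun ℚ fun p : heightLE k => p.1.semilength := by
  ext n
  have hcard : Nat.card {p : heightLE k // p.1.semilength = n} =
      Nat.card {P : List ℤ // IsDyck n P ∧ pathHeight P ≤ k} := by
    refine Nat.card_eq_of_bijective
      (fun p => ⟨toPath p.1.1, by simpa only [p.2] using isDyck_toPath p.1.1, p.1.2⟩) ⟨?_, ?_⟩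
    · exact fun p q hpq => Subtype.ext (Subtype.ext (toPath_injective (Subtype.mk.inj hpq)))
    · rintro ⟨P, dyck, height_le⟩
      obtain ⟨p, semilength_eq, rfl⟩ := exists_toPath_eq dyck
      exact ⟨⟨⟨p, height_le⟩, semilength_eq⟩, rfl⟩
  simp only [G, genFun, PowerSeries.coeff_mk, hcard]

theorem nest_add_inj {p p' q q' : DyckWord} :
    p.nest + q = p'.nest + q' ↔ p = p' ∧ q = q' := by
  refine ⟨fun h => ⟨?_, ?_⟩, fun ⟨hp, hq⟩ => hp ▸ hq ▸ rfl⟩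
  · simpa using congrArg DyckWord.insidePart h
  · simpa using congrArg DyckWord.outsidePart h

theorem nest_add_ne_zero (p q : DyckWord) : p.nest + q ≠ 0 := fun h => by
  simpa using congrArg DyckWord.semilength h

/-- The inverse of the first-return decomposition: `none` stands for the empty word, and
`some (p, q)` for the word `U p D q`. -/
def firstReturnJoin (k : ℕ) : Option (heightLE k × heightLE (k + 1)) → heightLE (k + 1)
  | none => ⟨0, zero_mem_heightLE (k + 1)⟩
  | some (p, q) => ⟨p.1.nest + q.1, nest_add_mem_heightLE.mpr ⟨p.2, q.2⟩⟩

theorem firstReturnJoin_bijective (k : ℕ) : Function.Bijective (firstReturnJoin k) := by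
  constructor
  · rintro (_ | ⟨⟨p, hp⟩, ⟨q, hq⟩⟩) (_ | ⟨⟨p', hp'⟩, ⟨q', hq'⟩⟩) h
    · rfl
    · exact absurd (congrArg Subtype.val h).symm (nest_add_ne_zero p' q')
    · exact absurd (congrArg Subtype.val h) (nest_add_ne_zero p q)
    · obtain ⟨rfl, rfl⟩ := nest_add_inj.mp (congrArg Subtype.val h)
      rfl
  · rintro ⟨p, hp⟩
    rcases eq_or_ne p 0 with rfl | hne
    · exact ⟨none, rfl⟩
    · have decomposition := DyckWord.nest_insidePart_add_outsidePart hne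
      rw [← decomposition, nest_add_mem_heightLE] at hp
      exact ⟨some (⟨_, hp.1⟩, ⟨_, hp.2⟩), Subtype.ext decomposition⟩

end DyckWord

theorem G_recurrence (k : ℕ) (hk : 1 ≤ k) :
    G k * (1 - PowerSeries.X * G (k - 1)) = 1 := by
  obtain ⟨j, rfl⟩ := Nat.exists_eq_add_of_le' hk
  have functional_equation : G (j + 1) = 1 + PowerSeries.X * (G j * G (j + 1)) := by
    calc G (j + 1)
      _ = genFun ℚ fun o => (firstReturnJoin j o).1.semilength := by
          rw [G_eq_genFun, genFun_comp_of_bijective (firstReturnJoin_bijective j) (·.1.semilength)]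
      _ = 1 + PowerSeries.X * genFun ℚ fun x : heightLE j × heightLE (j + 1) =>
            x.1.1.semilength + x.2.1.semilength :=
          genFun_option rfl fun x => by simp [firstReturnJoin, add_right_comm]
      _ = 1 + PowerSeries.X * (G j * G (j + 1)) := by
          rw [G_eq_genFun, G_eq_genFun, ← genFun_prod]
  rw [Nat.add_sub_cancel]
  linear_combination functional_equation
end
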